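/- Let $k$ be a field of characteristic zero, $t\in k$, and let $A$ be a $k$-vector space with a commutative bilinear product $(a,b)\mapsto ab$ and an anticommutative bilinear bracket $(a,b)\mapsto\{a,b\}$ satisfying: (i) $(a_1a_2)a_3 - a_1(a_2a_3) = t\,\big(\{\{a_1,a_2\},a_3\} - \{\{a_3,a_2\},a_1\} + 2\{\{a_1,a_3\},a_2\}\big)$ and (ii) the Leibniz identity $\{a_1a_2,a_3\} = \{a_1,a_3\}a_2 + a_1\{a_2,a_3\}$. Then for all $a_1,a_2,a_3,a_4\in A$ the following identity holds: $t\,\big(\{\{\{a_1,a_2\},a_3\},a_4\} - \{\{\{a_3,a_2\},a_1\},a_4\} + 2\{\{\{a_1,a_3\},a_2\},a_4\}\big) = t\,\big(\{\{a_1,a_2\},\{a_3,a_4\}\} - \{\{\{a_3,a_4\},a_2\},a_1\} + 2\{\{a_1,\{a_3,a_4\}\},a_2\}\big) + t\,\big(\{\{\{a_1,a_4\},a_2\},a_3\} - \{\{a_3,a_2\},\{a_1,a_4\}\} + 2\{\{\{a_1,a_4\},a_3\},a_2\}\big) + t\,\big(\{\{a_1,\{a_2,a_4\}\},a_3\} -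 \{\{a_3,\{a_2,a_4\}\},a_1\} + 2\{\{a_1,a_3\},\{a_2,a_4\}\}\big)$, both sides being equal to $\{(a_1a_2)a_3 - a_1(a_2a_3),\, a_4\}$. -/

import Mathlib

/-! A derivation of a bilinear product is also a derivation of its associator, viewed as a ternary
operation. By the Leibniz rule `{·, a₄}` is a derivation of the product, and by (i) the associator
is `t` times an iterated bracket, so `{·, a₄}` obeys the ternary Leibniz rule on that bracket. -/

section

variable {R A : Type*} [CommSemiring R] [AddCommGroup A] [Module R A]

/-- The associator `(ab)c - a(bc)` of a product given as a bilinear map, as opposed to Mathlib's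
`associator`, which needs the product to be the multiplication of the type. -/
def bilinAssociator (m : A →ₗ[R] A →ₗ[R] A) (a b c : A) : A :=
  m (m a b) c - m a (m b c)

/-- The iterated bracket `{{a,b},c} - {{c,b},a} + 2{{a,c},b}` to which relation (i) makes the
associator proportional. -/
def bracketAssociator (br : A →ₗ[R] A →ₗ[R] A) (a b c : A) : A :=
  br (br a b) c - br (br c b) a + (2 : R) • br (br a c) b

theorem map_bilinAssociator_of_leibniz (m : A →ₗ[R] A →ₗ[R] A) (D : A →ₗ[R] A)
    (hD : ∀ a b, D (m a b) = m (D a) b + m a (D b)) (a b c : A) :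
    D (bilinAssociator m a b c) =
      bilinAssociator m a b (D c) + bilinAssociator m (D a) b c + bilinAssociator m a (D b) c := by
  simp only [bilinAssociator, map_sub, hD, map_add, LinearMap.add_apply]
  abel

theorem map_bracketAssociator (br : A →ₗ[R] A →ₗ[R] A) (D : A →ₗ[R] A) (a b c : A) :
    D (bracketAssociator br a b c) =
      D (br (br a b) c) - D (br (br c b) a) + (2 : R) • D (br (br a c) b) := by
  simp only [bracketAssociator, map_add, map_sub, map_smul]

theorem key_identity_for_t_general (m br : A →ₗ[R] A →ₗ[R] A) (t : R)
    (hassoc : ∀ a b c, bilinAssociator m a b c = t • bracketAssociator br a b c)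
    (hleibniz : ∀ a b c, br (m a b) c = m (br a c) b + m a (br b c)) (a b c d : A) :
    t • (br (br (br a b) c) d - br (br (br c b) a) d + (2 : R) • br (br (br a c) b) d) =
        t • bracketAssociator br a b (br c d) + t • bracketAssociator br (br a d) b c +
          t • bracketAssociator br a (br b d) c ∧
      t • (br (br (br a b) c) d - br (br (br c b) a) d + (2 : R) • br (br (br a c) b) d) =
        br (bilinAssociator m a b c) d := by
  have by_linearity :
      t • (br (br (br a b) c) d - br (br (br c b) a) d + (2 : R) • br (br (br a c) b) d) =
        br (bilinAssociator m a b c) d := calc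
    _ = t • br.flip d (bracketAssociator br a b c) :=
      congrArg (t • ·) (map_bracketAssociator br (br.flip d) a b c).symm
    _ = br.flip d (bilinAssociator m a b c) := by rw [hassoc, map_smul]
  have by_leibniz :
      br (bilinAssociator m a b c) d =
        bilinAssociator m a b (br c d) + bilinAssociator m (br a d) b c +
          bilinAssociator m a (br b d) c :=
    map_bilinAssociator_of_leibniz m (br.flip d) (fun x y ↦ hleibniz x y d) a b c
  rw [hassoc a b (br c d), hassoc (br a d) b c, hassoc a (br b d) c] at by_leibniz
  exact ⟨by_linearity.trans by_leibniz, by_linearity⟩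

end

/-- The key exact computation in the proof of the main theorem:
under relations (i) `(a₁a₂)a₃ - a₁(a₂a₃) = t({{a₁,a₂},a₃} - {{a₃,a₂},a₁} + 2{{a₁,a₃},a₂})`
and (ii) `{a₁a₂,a₃} = {a₁,a₃}a₂ + a₁{a₂,a₃}`, computing
`{(a₁a₂)a₃ - a₁(a₂a₃), a₄}` in two ways yields the stated four-variable
identity, both sides being equal to `{(a₁a₂)a₃ - a₁(a₂a₃), a₄}`. -/
theorem key_identity_for_t
    {k A : Type*} [Field k] [CharZero k] [AddCommGroup A] [Module k A]
    (m : A →ₗ[k] A →ₗ[k] A) (br : A →ₗ[k] A →ₗ[k] A) (t : k)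
    (hcomm : ∀ a b : A, m a b = m b a)
    (hanti : ∀ a b : A, br a b = - br b a)
    (hrel1 : ∀ a₁ a₂ a₃ : A,
      m (m a₁ a₂) a₃ - m a₁ (m a₂ a₃)
        = t • (br (br a₁ a₂) a₃ - br (br a₃ a₂) a₁ + (2 : k) • br (br a₁ a₃) a₂))
    (hrel2 : ∀ a₁ a₂ a₃ : A,
      br (m a₁ a₂) a₃ = m (br a₁ a₃) a₂ + m a₁ (br a₂ a₃)) :
    ∀ a₁ a₂ a₃ a₄ : A,
      t • (br (br (br a₁ a₂) a₃) a₄ - br (br (br a₃ a₂) a₁) a₄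
            + (2 : k) • br (br (br a₁ a₃) a₂) a₄)
        = t • (br (br a₁ a₂) (br a₃ a₄) - br (br (br a₃ a₄) a₂) a₁
              + (2 : k) • br (br a₁ (br a₃ a₄)) a₂)
          + t • (br (br (br a₁ a₄) a₂) a₃ - br (br a₃ a₂) (br a₁ a₄)
              + (2 : k) • br (br (br a₁ a₄) a₃) a₂)
          + t • (br (br a₁ (br a₂ a₄)) a₃ - br (br a₃ (br a₂ a₄)) a₁
              + (2 : k) • br (br a₁ a₃) (br a₂ a₄)) ∧
      t • (br (br (br a₁ a₂) a₃) a₄ - br (br (br a₃ a₂) a₁) a₄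
            + (2 : k) • br (br (br a₁ a₃) a₂) a₄)
        = br (m (m a₁ a₂) a₃ - m a₁ (m a₂ a₃)) a₄ :=
  key_identity_for_t_general m br t hrel1 hrel2
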